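/- Let (X, f) and (Y, g) be asymmetric normed spaces, each carrying the real normed space structure of its associated norm, with Y a complete normed space. Assume c(X) = 0 (for every ε > 0 there exists x with f x = 1 and f (-x) < ε) and that there exists e ∈ Y with g e = 1 and g (-e) = 0. Then for every continuous linear H : X →L[ℝ] Y with (∃ C ≥ 0, ∀ x, g (H x) ≤ C * f x) and every ε > 0, there exists T : X →L[ℝ] Y with (∀ x, g (T x) ≤ ε * f x) such that H + T belongs to L_c(X, Y) but -(H + T) does not: ¬ ∃ C ≥ 0, ∀ x, g (-(H x + T x)) ≤ C * f x. -/

import Mathlib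

/-!
If `-(H + T) ∈ L_c(X, Y)`, then `-T = -(H + T) + H ∈ L_c(X, Y)`, because `L_c(X, Y)` is a cone
containing `H`. So it suffices to find one `T` with `g (T x) ≤ f x` and `-T ∉ L_c(X, Y)`, and to
perturb by `ε • T`.

As `g (t • e) = t⁺`, we may take `T x = φ x • e` for a linear functional `φ ≤ f` such that
`-φ ≤ C * f` fails for every `C ≥ 0`. Let `∑ w n = 1` with `w n > 0`, choose `x n` with
`f (x n) = 1` and `f (-x n) < w n / (n + 1)`, and let `φ n ≤ f` be a Hahn-Banach functional with
`φ n (x n) = 1`. All the gaps `f - φ n` are nonnegative, so `φ = ∑ w n • φ n` satisfies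
`f - φ ≥ w n • (f - φ n)`; evaluated at `-x n` this gives
`f (-x n) + φ (x n) ≥ w n > (n + 1) * f (-x n)`.
-/

/-- `f` is an asymmetric norm on the real vector space `X`. -/
def IsAsymmNorm {X : Type*} [AddCommGroup X] [Module ℝ X] (f : X → ℝ) : Prop :=
  (∀ x, 0 ≤ f x) ∧ (∀ (c : ℝ), 0 ≤ c → ∀ x, f (c • x) = c * f x) ∧
  (∀ x y, f (x + y) ≤ f x + f y) ∧ (∀ x, f x = 0 → f (-x) = 0 → x = 0)

/-- An asymmetric seminorm: an asymmetric norm that need not separate points. -/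
structure IsAsymmSeminorm {X : Type*} [AddCommGroup X] [Module ℝ X] (f : X → ℝ) : Prop where
  nonneg : ∀ x, 0 ≤ f x
  map_smul : ∀ c : ℝ, 0 ≤ c → ∀ x, f (c • x) = c * f x
  map_add_le : ∀ x y, f (x + y) ≤ f x + f y

/-- The boundedness condition defining the cone `L_c(X, Y)`, for an arbitrary map `T` between sets
equipped with real-valued functions `f` and `g`. -/
def IsAsymmBounded {X Y : Type*} (f : X → ℝ) (g : Y → ℝ) (T : X → Y) : Prop :=
  ∃ C ≥ (0 : ℝ), ∀ x, g (T x) ≤ C * f x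

theorem exists_linearMap_apply_eq_of_sublinear {E : Type*} [AddCommGroup E] [Module ℝ E]
    (N : E → ℝ) (N_hom : ∀ c : ℝ, 0 < c → ∀ x, N (c • x) = c * N x)
    (N_add : ∀ x y, N (x + y) ≤ N x + N y) (x : E) :
    ∃ φ : E →ₗ[ℝ] ℝ, φ x = N x ∧ ∀ y, φ y ≤ N y := by
  have N_zero : N 0 = 0 := by
    have h := N_hom 2 two_pos 0
    rw [smul_zero] at h
    linarith
  have smul_le : ∀ c : ℝ, c * N x ≤ N (c • x) := fun c => by
    rcases lt_trichotomy c 0 with hc | rfl | hc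
    · have h_add := N_add (c • x) (-c • x)
      rw [N_hom (-c) (neg_pos.2 hc), ← add_smul, add_neg_cancel, zero_smul, N_zero] at h_add
      linarith
    · simp [N_zero]
    · exact (N_hom c hc x).ge
  have well_defined : ∀ c : ℝ, c • x = 0 → c • N x = 0 := fun c hcx => by
    rcases smul_eq_zero.1 hcx with rfl | rfl
    · exact zero_smul ℝ _
    · rw [N_zero, smul_zero]
  obtain ⟨φ, φ_ext, φ_le⟩ := exists_extension_of_le_sublinear
    (LinearPMap.mkSpanSingleton' x (N x) well_defined) N N_hom N_add (by
      rintro ⟨y, hy⟩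
      obtain ⟨c, rfl⟩ := Submodule.mem_span_singleton.1 hy
      rw [LinearPMap.mkSpanSingleton'_apply]
      exact smul_le c)
  refine ⟨φ, ?_, φ_le⟩
  exact (φ_ext ⟨x, Submodule.mem_span_singleton_self x⟩).trans
    (LinearPMap.mkSpanSingleton'_apply_self x (N x) well_defined _)

section DominatedFunctionals

variable {X : Type*} [AddCommGroup X] [Module ℝ X] {f : X → ℝ}

theorem abs_linearMap_le_max {φ : X →ₗ[ℝ] ℝ} (hφ : ∀ x, φ x ≤ f x) (x : X) :
    |φ x| ≤ max (f x) (f (-x)) := by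
  refine abs_le'.2 ⟨(hφ x).trans (le_max_left _ _), ?_⟩
  rw [← map_neg]
  exact (hφ (-x)).trans (le_max_right _ _)

theorem continuous_linearMap_of_forall_le [TopologicalSpace X] [IsTopologicalAddGroup X]
    (hf : ContinuousAt f 0) (hf0 : f 0 = 0) {φ : X →ₗ[ℝ] ℝ} (hφ : ∀ x, φ x ≤ f x) :
    Continuous φ := by
  have hf_neg : ContinuousAt (fun x => f (-x)) 0 :=
    ContinuousAt.comp (by rwa [neg_zero]) continuous_neg.continuousAt
  have hmax : Filter.Tendsto (fun x => max (f x) (f (-x))) (nhds 0) (nhds 0) := by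
    simpa only [ContinuousAt, neg_zero, hf0, max_self] using hf.max hf_neg
  refine continuous_of_continuousAt_zero φ ?_
  rw [ContinuousAt, map_zero]
  exact squeeze_zero_norm (abs_linearMap_le_max hφ) hmax

theorem exists_linearMap_hasSum_of_forall_le {ι : Type*} {w : ι → ℝ} (hw : ∀ i, 0 ≤ w i)
    (hw_sum : Summable w) {φ : ι → X →ₗ[ℝ] ℝ} (hφ : ∀ i x, φ i x ≤ f x) :
    ∃ ψ : X →ₗ[ℝ] ℝ, ∀ x, HasSum (fun i => w i * φ i x) (ψ x) := by
  have summable (x : X) : Summable fun i => w i * φ i x := by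
    refine (hw_sum.mul_right (max (f x) (f (-x)))).of_norm_bounded fun i => ?_
    rw [norm_mul, Real.norm_of_nonneg (hw i)]
    exact mul_le_mul_of_nonneg_left (abs_linearMap_le_max (hφ i) x) (hw i)
  refine ⟨{ toFun := fun x => ∑' i, w i * φ i x, map_add' := fun x y => ?_,
            map_smul' := fun c x => ?_ }, fun x => (summable x).hasSum⟩
  · simp only [map_add, mul_add]
    exact (summable x).tsum_add (summable y)
  · simp only [map_smul, smul_eq_mul, RingHom.id_apply, mul_left_comm _ c, tsum_mul_left]

theorem exists_linearMap_le_and_gap_le {ι : Type*} {w : ι → ℝ} (hw : ∀ i, 0 ≤ w i)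
    (hw_sum : HasSum w 1) {φ : ι → X →ₗ[ℝ] ℝ} (hφ : ∀ i x, φ i x ≤ f x) :
    ∃ ψ : X →ₗ[ℝ] ℝ, (∀ x, ψ x ≤ f x) ∧ ∀ i x, w i * (f x - φ i x) ≤ f x - ψ x := by
  obtain ⟨ψ, hψ⟩ := exists_linearMap_hasSum_of_forall_le hw hw_sum.summable hφ
  have gap_hasSum (x : X) : HasSum (fun i => w i * (f x - φ i x)) (f x - ψ x) := by
    simpa only [mul_sub, one_mul] using (hw_sum.mul_right (f x)).sub (hψ x)
  have gap_nonneg (i : ι) (x : X) : 0 ≤ w i * (f x - φ i x) :=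
    mul_nonneg (hw i) (sub_nonneg.2 (hφ i x))
  exact ⟨ψ, fun x => sub_nonneg.1 ((gap_hasSum x).nonneg fun i => gap_nonneg i x),
    fun i x => le_hasSum (gap_hasSum x) i fun j _ => gap_nonneg j x⟩

end DominatedFunctionals

namespace IsAsymmBounded

variable {X Y : Type*} {f : X → ℝ} {g : Y → ℝ} {S T : X → Y}

theorem add [Add Y] (hg : ∀ y z, g (y + z) ≤ g y + g z) (hS : IsAsymmBounded f g S)
    (hT : IsAsymmBounded f g T) : IsAsymmBounded f g (S + T) := by
  obtain ⟨C, hC, hSC⟩ := hS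
  obtain ⟨D, hD, hTD⟩ := hT
  refine ⟨C + D, add_nonneg hC hD, fun x => ?_⟩
  rw [add_mul]
  exact (hg _ _).trans (add_le_add (hSC x) (hTD x))

theorem const_smul [SMul ℝ Y] (hg : ∀ c : ℝ, 0 ≤ c → ∀ y, g (c • y) = c * g y) {c : ℝ}
    (hc : 0 ≤ c) (hT : IsAsymmBounded f g T) : IsAsymmBounded f g (c • T) := by
  obtain ⟨C, hC, hTC⟩ := hT
  refine ⟨c * C, mul_nonneg hc hC, fun x => ?_⟩
  rw [Pi.smul_apply, hg c hc, mul_assoc]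
  exact mul_le_mul_of_nonneg_left (hTC x) hc

end IsAsymmBounded

theorem IsAsymmNorm.isAsymmSeminorm {X : Type*} [AddCommGroup X] [Module ℝ X] {f : X → ℝ}
    (hf : IsAsymmNorm f) : IsAsymmSeminorm f :=
  ⟨hf.1, hf.2.1, hf.2.2.1⟩

namespace IsAsymmSeminorm

section Module

variable {X : Type*} [AddCommGroup X] [Module ℝ X] {f : X → ℝ}

protected theorem map_zero (hf : IsAsymmSeminorm f) : f 0 = 0 := by
  simpa only [zero_smul, zero_mul] using hf.map_smul 0 le_rfl 0

theorem map_smul_eq_posPart (hf : IsAsymmSeminorm f) {e : X} (he : f e = 1) (he' : f (-e) = 0)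
    (t : ℝ) : f (t • e) = t⁺ := by
  rcases le_total 0 t with ht | ht
  · rw [hf.map_smul t ht, he, mul_one, posPart_eq_self.2 ht]
  · rw [← neg_smul_neg, hf.map_smul (-t) (neg_nonneg.2 ht), he', mul_zero, posPart_eq_zero.2 ht]

theorem exists_le_not_isAsymmBounded_neg (hf : IsAsymmSeminorm f)
    (hcX : ∀ ε > (0 : ℝ), ∃ x : X, f x = 1 ∧ f (-x) < ε) :
    ∃ φ : X →ₗ[ℝ] ℝ, (∀ x, φ x ≤ f x) ∧ ¬ IsAsymmBounded f id (-φ) := by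
  set w : ℕ → ℝ := fun n => 1 / 2 / 2 ^ n
  have w_pos (n : ℕ) : 0 < w n := by positivity
  have w_sum : HasSum w 1 := hasSum_geometric_two' 1
  choose x hx hx_neg using fun n : ℕ => hcX (w n / (n + 1)) (div_pos (w_pos n) n.cast_add_one_pos)
  choose φ hφx hφ_le using fun n => exists_linearMap_apply_eq_of_sublinear f
    (fun c hc => hf.map_smul c hc.le) hf.map_add_le (x n)
  obtain ⟨ψ, hψ_le, hψ_gap⟩ := exists_linearMap_le_and_gap_le (fun n => (w_pos n).le) w_sum hφ_le
  refine ⟨ψ, hψ_le, fun ⟨C, _, hC⟩ => ?_⟩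
  obtain ⟨n, hn⟩ := exists_nat_ge C
  have f_nonneg : 0 ≤ f (-x n) := hf.nonneg _
  have ψ_le : ψ (x n) ≤ n * f (-x n) := calc
    ψ (x n) ≤ C * f (-x n) := by simpa using hC (-x n)
    _ ≤ n * f (-x n) := mul_le_mul_of_nonneg_right hn f_nonneg
  have : w n < w n := calc
    w n ≤ w n * (f (-x n) - φ n (-x n)) := by
      rw [map_neg, hφx, hx]
      exact le_mul_of_one_le_right (w_pos n).le (by linarith)
    _ ≤ f (-x n) - ψ (-x n) := hψ_gap n (-x n)
    _ = f (-x n) + ψ (x n) := by rw [map_neg, sub_neg_eq_add]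
    _ ≤ f (-x n) * (n + 1) := by linarith
    _ < w n := (lt_div_iff₀ n.cast_add_one_pos).1 (hx_neg n)
  exact this.false

end Module

theorem continuousAt_zero {X : Type*} [SeminormedAddCommGroup X] [Module ℝ X] {f : X → ℝ}
    (hf : IsAsymmSeminorm f) (hf_le : ∀ x, f x ≤ ‖x‖) : ContinuousAt f 0 := by
  rw [ContinuousAt, hf.map_zero]
  exact squeeze_zero hf.nonneg hf_le tendsto_norm_zero

section Operators

variable {X Y : Type*} [AddCommGroup X] [Module ℝ X] [TopologicalSpace X] [IsTopologicalAddGroup X]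
  [AddCommGroup Y] [Module ℝ Y] [TopologicalSpace Y] [ContinuousSMul ℝ Y] {f : X → ℝ} {g : Y → ℝ}

theorem exists_apply_le_not_isAsymmBounded_neg (hf : IsAsymmSeminorm f)
    (hg : IsAsymmSeminorm g) (hf_cont : ContinuousAt f 0)
    (hcX : ∀ ε > (0 : ℝ), ∃ x : X, f x = 1 ∧ f (-x) < ε) {e : Y} (he : g e = 1)
    (he' : g (-e) = 0) :
    ∃ T : X →L[ℝ] Y, (∀ x, g (T x) ≤ f x) ∧ ¬ IsAsymmBounded f g (-T) := by
  obtain ⟨φ, hφ_le, hφ_neg⟩ := hf.exists_le_not_isAsymmBounded_neg hcX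
  let φL : X →L[ℝ] ℝ := ⟨φ, continuous_linearMap_of_forall_le hf_cont hf.map_zero hφ_le⟩
  refine ⟨φL.smulRight e, fun x => ?_, fun ⟨C, hC, hT⟩ => hφ_neg ⟨C, hC, fun x => ?_⟩⟩
  · calc g (φ x • e) = (φ x)⁺ := hg.map_smul_eq_posPart he he' (φ x)
      _ ≤ f x := sup_le (hφ_le x) (hf.nonneg x)
  · calc -φ x ≤ (-φ x)⁺ := le_posPart _
      _ = g (-(φ x • e)) := by rw [← hg.map_smul_eq_posPart he he', neg_smul]
      _ ≤ C * f x := hT x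

end Operators

end IsAsymmSeminorm

theorem dense_non_negatable_in_Lc_general {X Y : Type*} [AddCommGroup X] [Module ℝ X]
    [TopologicalSpace X] [IsTopologicalAddGroup X] [AddCommGroup Y] [Module ℝ Y]
    [TopologicalSpace Y] [ContinuousSMul ℝ Y] {f : X → ℝ} {g : Y → ℝ} (hf : IsAsymmSeminorm f)
    (hg : IsAsymmSeminorm g) (hf_cont : ContinuousAt f 0)
    (hcX : ∀ ε > (0 : ℝ), ∃ x : X, f x = 1 ∧ f (-x) < ε) {e : Y} (he : g e = 1)
    (he' : g (-e) = 0) {H : X → Y} (hH : IsAsymmBounded f g H) {ε : ℝ} (hε : 0 < ε) :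
    ∃ T : X →L[ℝ] Y, (∀ x, g (T x) ≤ ε * f x) ∧ IsAsymmBounded f g (H + T) ∧
      ¬ IsAsymmBounded f g (-(H + T)) := by
  obtain ⟨T, hT_le, hT_neg⟩ :=
    hf.exists_apply_le_not_isAsymmBounded_neg hg hf_cont hcX he he'
  have hεT_le (x : X) : g ((ε • T) x) ≤ ε * f x := by
    rw [smul_apply, hg.map_smul ε hε.le]
    exact mul_le_mul_of_nonneg_left (hT_le x) hε.le
  refine ⟨ε • T, hεT_le, hH.add hg.map_add_le ⟨ε, hε.le, hεT_le⟩, fun h_neg => hT_neg ?_⟩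
  have neg_T_eq : -⇑T = ε⁻¹ • (-(H + ⇑(ε • T)) + H) := by
    rw [neg_add_rev, neg_add_cancel_right, FunLike.coe_smul, ← smul_neg, inv_smul_smul₀ hε.ne']
  rw [neg_T_eq]
  exact (h_neg.add hg.map_add_le hH).const_smul hg.map_smul (inv_nonneg.2 hε.le)

/-- If `c(X) = 0` and `Y` is a biBanach asymmetric space which is not T1, then the
set of `H ∈ L_c(X,Y)` with `-H ∉ L_c(X,Y)` is dense in `L_c(X,Y)` for the asymmetric
operator norm: for every `H ∈ L_c(X,Y)` and `ε > 0` there is `T` with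
`g (T x) ≤ ε * f x` for all `x`, `H + T ∈ L_c(X,Y)` and `-(H + T) ∉ L_c(X,Y)`. -/
theorem dense_non_negatable_in_Lc
    {X Y : Type*} [NormedAddCommGroup X] [NormedSpace ℝ X]
    [NormedAddCommGroup Y] [NormedSpace ℝ Y] [CompleteSpace Y]
    (f : X → ℝ) (g : Y → ℝ) (hf : IsAsymmNorm f) (hg : IsAsymmNorm g)
    (hXnorm : ∀ x : X, ‖x‖ = max (f x) (f (-x)))
    (hYnorm : ∀ y : Y, ‖y‖ = max (g y) (g (-y)))
    (hcX : ∀ ε > (0 : ℝ), ∃ x : X, f x = 1 ∧ f (-x) < ε)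
    (e : Y) (he : g e = 1) (he' : g (-e) = 0) :
    ∀ H : X →L[ℝ] Y, (∃ C ≥ (0 : ℝ), ∀ x, g (H x) ≤ C * f x) →
      ∀ ε > (0 : ℝ), ∃ T : X →L[ℝ] Y,
        (∀ x, g (T x) ≤ ε * f x) ∧
        (∃ C ≥ (0 : ℝ), ∀ x, g (H x + T x) ≤ C * f x) ∧
        ¬ (∃ C ≥ (0 : ℝ), ∀ x, g (-(H x + T x)) ≤ C * f x) :=
  have f_le_norm (x : X) : f x ≤ ‖x‖ := (le_max_left _ _).trans_eq (hXnorm x).symm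
  fun _ hH _ hε => dense_non_negatable_in_Lc_general hf.isAsymmSeminorm hg.isAsymmSeminorm
    (hf.isAsymmSeminorm.continuousAt_zero f_le_norm) hcX he he' hH hε
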